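/- Let T and T' be labeled triangles in the Euclidean plane having the same area. If Λ(T,T') ≤ 1, then Λ(T,T') = 1 and T and T' are isometric as labeled triangles, i.e. ‖e_i‖ = ‖e'_i‖ for each i ∈ {1,2,3}. -/

import Mathlib

open Metric Set ENNReal

noncomputable section

abbrev E2 := EuclideanSpace ℝ (Fin 2)

/-- The (filled) triangle with labeled vertices `v 0, v 1, v 2`. -/
def Tri (v : Fin 3 → E2) : Set E2 := convexHull ℝ (Set.range v)

/-- `edgeLen v i` is the length of the edge opposite to vertex `i`. -/
def edgeLen (v : Fin 3 → E2) (i : Fin 3) : ℝ := dist (v (i + 1)) (v (i + 2))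

/-- `altLen v i` is the length of the altitude from vertex `i`. -/
def altLen (v : Fin 3 → E2) (i : Fin 3) : ℝ :=
  Metric.infDist (v i) ((affineSpan ℝ ({v (i + 1), v (i + 2)} : Set E2) : Set E2))

/-- `ang v i` is the interior angle at vertex `i`. -/
def ang (v : Fin 3 → E2) (i : Fin 3) : ℝ :=
  EuclideanGeometry.angle (v (i + 1)) (v i) (v (i + 2))

def IsAcute (v : Fin 3 → E2) : Prop := ∀ i, ang v i < Real.pi / 2

def IsNonObtuse (v : Fin 3 → E2) : Prop := ∀ i, ang v i ≤ Real.pi / 2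

def triArea (v : Fin 3 → E2) : ℝ := edgeLen v 0 * altLen v 0 / 2

/-- `f` restricts to a label-preserving homeomorphism from the triangle on `v`
onto the triangle on `v'`. -/
def IsLabelHomeo (v v' : Fin 3 → E2) (f : E2 → E2) : Prop :=
  ContinuousOn f (Tri v) ∧ Set.BijOn f (Tri v) (Tri v') ∧
  (∃ g : E2 → E2, ContinuousOn g (Tri v') ∧ Set.InvOn g f (Tri v) (Tri v')) ∧
  ∀ i, f (v i) = v' i

/-- The Lipschitz constant `L(f)` of `f` on the triangle on `v`,
`sup {dist (f x) (f y) / dist x y : x ≠ y}`, as a value in `ℝ≥0∞`. -/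
def lipConst (v : Fin 3 → E2) (f : E2 → E2) : ℝ≥0∞ :=
  ⨆ x ∈ Tri v, ⨆ y ∈ Tri v, edist (f x) (f y) / edist x y

/-- `Λ(T,T')`: infimum of Lipschitz constants of label-preserving homeomorphisms. -/
def Lam (v v' : Fin 3 → E2) : ℝ≥0∞ :=
  ⨅ (f : E2 → E2) (_ : IsLabelHomeo v v' f), lipConst v f

/-- `M(T,T')`: the max of the six ratios of edge lengths and altitude lengths. -/
def Mdist (v v' : Fin 3 → E2) : ℝ :=
  max (max (max (edgeLen v' 0 / edgeLen v 0) (edgeLen v' 1 / edgeLen v 1))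
        (edgeLen v' 2 / edgeLen v 2))
      (max (max (altLen v' 0 / altLen v 0) (altLen v' 1 / altLen v 1))
        (altLen v' 2 / altLen v 2))

/-!
A nonexpanding map that does not decrease the total volume of a set decreases the volume of none of
its measurable subsets. Apply this to two tangent balls of equal radius: their images lie in balls
of the same radius around the images of the centres, and if the centres came closer these balls
would overlap and volume would be lost. So short distances are preserved in the interior. By strict
convexity, each of many equally spaced points on a segment is then sent to the midpoint of the
images of its neighbours, so long distances are preserved too.

If `Λ(T, T') ≤ 1`, an ultrafilter limit of label-preserving homeomorphisms is a nonexpanding map of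
`T` onto `T'`. It need not be injective a priori, but surjectivity and equality of areas suffice for
the argument above.
-/

open MeasureTheory Filter Topology Module
open scoped NNReal Pointwise RealInnerProductSpace

section VolumeRigidity

variable {X Y E F : Type*}

lemma hausdorffMeasure_le_image_of_subset [EMetricSpace X] [MeasurableSpace X] [BorelSpace X]
    [EMetricSpace Y] [MeasurableSpace Y] [BorelSpace Y] {f : X → Y} {s t : Set X} {d : ℝ}
    (hd : 0 ≤ d) (hf : LipschitzOnWith 1 f s) (hfin : μH[d] s ≠ ∞) (hle : μH[d] s ≤ μH[d] (f '' s))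
    (ht : MeasurableSet t) (hts : t ⊆ s) : μH[d] t ≤ μH[d] (f '' t) := by
  have hdiff : μH[d] (f '' (s \ t)) ≤ μH[d] (s \ t) := by
    simpa using (hf.mono sdiff_subset).hausdorffMeasure_image_le hd
  have hdiff_fin : μH[d] (s \ t) ≠ ∞ := measure_ne_top_of_subset sdiff_subset hfin
  refine (ENNReal.add_le_add_iff_right hdiff_fin).1 ?_
  calc μH[d] t + μH[d] (s \ t) = μH[d] s := by
        rw [← measure_inter_add_sdiff s ht, inter_eq_right.2 hts]
    _ ≤ μH[d] (f '' t ∪ f '' (s \ t)) := by rwa [← image_union, union_sdiff_cancel hts]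
    _ ≤ μH[d] (f '' t) + μH[d] (f '' (s \ t)) := measure_union_le _ _
    _ ≤ μH[d] (f '' t) + μH[d] (s \ t) := by gcongr

lemma measure_ball_union_ball_lt [NormedAddCommGroup E] [NormedSpace ℝ E] [ProperSpace E]
    [MeasurableSpace E] [OpensMeasurableSpace E] (μ : Measure E) [μ.IsOpenPosMeasure]
    [IsFiniteMeasureOnCompacts μ] {x y : E} {r s : ℝ} (hr : 0 < r) (hs : 0 < s)
    (h : dist x y < r + s) : μ (ball x r ∪ ball y s) < μ (ball x r) + μ (ball y s) := by
  have hinter : (ball x r ∩ ball y s).Nonempty :=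
    not_disjoint_iff_nonempty_inter.1 fun hd => h.not_ge ((disjoint_ball_ball_iff hr hs).1 hd)
  rw [← measure_union_add_inter _ measurableSet_ball]
  exact ENNReal.lt_add_right
    (measure_union_ne_top measure_ball_lt_top.ne measure_ball_lt_top.ne)
    ((isOpen_ball.inter isOpen_ball).measure_pos μ hinter).ne'

lemma dist_map_eq_of_tangent_balls_subset [NormedAddCommGroup E] [NormedSpace ℝ E]
    [FiniteDimensional ℝ E] [MeasurableSpace E] [BorelSpace E] {f : E → E} {s : Set E}
    (hf : LipschitzOnWith 1 f s) (hfin : μH[finrank ℝ E] s ≠ ∞)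
    (hle : μH[finrank ℝ E] s ≤ μH[finrank ℝ E] (f '' s)) {x y : E} {r : ℝ} (hr : 0 < r)
    (hx : ball x r ⊆ s) (hy : ball y r ⊆ s) (hxy : dist x y = 2 * r) :
    dist (f x) (f y) = dist x y := by
  have : ProperSpace E := FiniteDimensional.proper ℝ E
  have hnonexp : ∀ p ∈ s, ∀ q ∈ s, dist (f p) (f q) ≤ dist p q := by
    simpa using lipschitzOnWith_iff_dist_le_mul.1 hf
  have hball : ∀ z, ball z r ⊆ s → f '' ball z r ⊆ ball (f z) r := by
    rintro z hz _ ⟨w, hw, rfl⟩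
    exact (hnonexp w (hz hw) z (hz (mem_ball_self hr))).trans_lt hw
  refine (hnonexp x (hx (mem_ball_self hr)) y (hy (mem_ball_self hr))).antisymm ?_
  by_contra! hlt
  let μ : Measure E := μH[finrank ℝ E]
  have hdisj : Disjoint (ball x r) (ball y r) := ball_disjoint_ball (by linarith)
  refine lt_irrefl (μ (ball x r ∪ ball y r)) ?_
  calc μ (ball x r ∪ ball y r)
      ≤ μ (f '' (ball x r ∪ ball y r)) :=
        hausdorffMeasure_le_image_of_subset (by positivity) hf hfin hle
          (measurableSet_ball.union measurableSet_ball) (union_subset hx hy)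
    _ ≤ μ (ball (f x) r ∪ ball (f y) r) := by
        rw [image_union]
        gcongr
        exacts [hball x hx, hball y hy]
    _ < μ (ball (f x) r) + μ (ball (f y) r) :=
        measure_ball_union_ball_lt μ hr hr (by linarith)
    _ = μ (ball x r ∪ ball y r) := by
        rw [measure_union hdisj measurableSet_ball]
        simp only [Measure.addHaar_ball_center]

lemma dist_eq_mul_of_dist_add_two_eq [NormedAddCommGroup F] [NormedSpace ℝ F]
    [StrictConvexSpace ℝ F] {a : ℕ → F} {n : ℕ} {s : ℝ}
    (hone : ∀ k < n, dist (a k) (a (k + 1)) = s)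
    (htwo : ∀ k, k + 2 ≤ n → dist (a k) (a (k + 2)) = 2 * s) :
    dist (a 0) (a n) = n * s := by
  have hincr : ∀ k < n, a (k + 1) - a k = a 1 - a 0 := by
    intro k
    induction k with
    | zero => simp
    | succ k ih =>
      intro hk
      have hmid : a (k + 1) = midpoint ℝ (a k) (a (k + 2)) :=
        eq_midpoint_of_dist_eq_half (by rw [hone k (by omega), htwo k hk]; ring)
          (by rw [hone (k + 1) hk, htwo k hk]; ring)
      rw [← ih (by omega), ← vsub_eq_sub, ← vsub_eq_sub, eq_comm]
      conv_lhs => rw [hmid, midpoint_vsub_left]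
      conv_rhs => rw [hmid, right_vsub_midpoint]
  have hsum : a n - a 0 = (n : ℝ) • (a 1 - a 0) := by
    rw [← Finset.sum_range_sub, Finset.sum_congr rfl fun k hk => hincr k (Finset.mem_range.1 hk),
      Finset.sum_const, Finset.card_range, Nat.cast_smul_eq_nsmul]
  rcases n.eq_zero_or_pos with rfl | hn
  · simp
  · rw [dist_eq_norm', hsum, norm_smul, ← dist_eq_norm', hone 0 hn, RCLike.norm_natCast]

lemma dist_map_eq_of_forall_segment [NormedAddCommGroup E] [NormedSpace ℝ E]
    [NormedAddCommGroup F] [NormedSpace ℝ F] [StrictConvexSpace ℝ F] {f : E → F} {x y : E} {δ : ℝ}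
    (hδ : 0 < δ)
    (hf : ∀ p ∈ segment ℝ x y, ∀ q ∈ segment ℝ x y, dist p q ≤ δ → dist (f p) (f q) = dist p q) :
    dist (f x) (f y) = dist x y := by
  obtain ⟨n, hn⟩ := exists_nat_gt (2 * dist x y / δ)
  have hn0 : (0 : ℝ) < n := lt_of_le_of_lt (by positivity) hn
  set s := dist x y / n with hs
  have hsδ : 2 * s ≤ δ := by
    rw [hs, ← mul_div_assoc, div_le_iff₀ hn0]
    exact ((div_lt_iff₀' hδ).1 hn).le
  let p : ℕ → E := fun k => AffineMap.lineMap x y ((k : ℝ) / n)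
  have hmem : ∀ k ≤ n, p k ∈ segment ℝ x y := fun k hk => by
    rw [segment_eq_image_lineMap]
    exact mem_image_of_mem _ ⟨by positivity, (div_le_one hn0).2 (by exact_mod_cast hk)⟩
  have hdist : ∀ k m : ℕ, dist (p k) (p (k + m)) = m * s := fun k m => by
    rw [dist_lineMap_lineMap, Real.dist_eq, ← sub_div, Nat.cast_add, sub_add_cancel_left, neg_div,
      abs_neg, abs_of_nonneg (by positivity), hs]
    ring
  have hshort : ∀ k m : ℕ, m ≤ 2 → k + m ≤ n → dist (f (p k)) (f (p (k + m))) = m * s := by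
    intro k m hm hkm
    have hms : (m : ℝ) * s ≤ 2 * s := by gcongr; exact_mod_cast hm
    rw [hf _ (hmem k (by omega)) _ (hmem _ hkm) (by rw [hdist]; exact hms.trans hsδ), hdist]
  calc dist (f x) (f y) = dist (f (p 0)) (f (p n)) := by simp [p, hn0.ne']
    _ = n * s := dist_eq_mul_of_dist_add_two_eq (a := f ∘ p)
        (fun k hk => by simpa using hshort k 1 one_le_two hk)
        (fun k hk => by simpa using hshort k 2 le_rfl hk)
    _ = dist x y := mul_div_cancel₀ _ hn0.ne'

variable [NormedAddCommGroup E] [NormedSpace ℝ E] [FiniteDimensional ℝ E]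
  [StrictConvexSpace ℝ E] [MeasurableSpace E] [BorelSpace E]

lemma dist_map_eq_of_mem_interior {f : E → E} {s : Set E} (hs : Convex ℝ s)
    (hf : LipschitzOnWith 1 f s) (hfin : μH[finrank ℝ E] s ≠ ∞)
    (hle : μH[finrank ℝ E] s ≤ μH[finrank ℝ E] (f '' s)) {x y : E} (hx : x ∈ interior s)
    (hy : y ∈ interior s) : dist (f x) (f y) = dist x y := by
  have hcompact : IsCompact (segment ℝ x y) := by
    rw [← convexHull_pair]
    exact (toFinite _).isCompact_convexHull (𝕜 := ℝ)
  obtain ⟨δ, hδ, hthick⟩ := hcompact.exists_thickening_subset_open isOpen_interior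
    (hs.interior.segment_subset hx hy)
  have hball : ∀ p ∈ segment ℝ x y, ball p δ ⊆ s := fun p hp =>
    (ball_subset_thickening hp δ).trans (hthick.trans interior_subset)
  refine dist_map_eq_of_forall_segment hδ fun p hp q hq hpq => ?_
  rcases eq_or_ne p q with rfl | hne
  · simp
  have hr : dist p q / 2 ≤ δ := by linarith
  exact dist_map_eq_of_tangent_balls_subset hf hfin hle (half_pos (dist_pos.2 hne))
    ((ball_subset_ball hr).trans (hball p hp)) ((ball_subset_ball hr).trans (hball q hq)) (by ring)

theorem dist_map_eq_of_hausdorffMeasure_le_image {f : E → E} {s : Set E} (hs : Convex ℝ s)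
    (hne : (interior s).Nonempty) (hf : LipschitzOnWith 1 f s) (hfin : μH[finrank ℝ E] s ≠ ∞)
    (hle : μH[finrank ℝ E] s ≤ μH[finrank ℝ E] (f '' s)) {x y : E} (hx : x ∈ s) (hy : y ∈ s) :
    dist (f x) (f y) = dist x y := by
  have hinterior : EqOn (fun p : E × E => dist (f p.1) (f p.2)) (fun p => dist p.1 p.2)
      (interior s ×ˢ interior s) := fun p hp =>
    dist_map_eq_of_mem_interior hs hf hfin hle hp.1 hp.2
  have hdense : s ×ˢ s ⊆ closure (interior s ×ˢ interior s) := by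
    rw [closure_prod_eq, hs.closure_interior_eq_closure_of_nonempty_interior hne]
    exact prod_mono subset_closure subset_closure
  have hcont : ContinuousOn (fun p : E × E => dist (f p.1) (f p.2)) (s ×ˢ s) :=
    continuous_dist.comp_continuousOn (hf.continuousOn.prodMap hf.continuousOn)
  exact hinterior.of_subset_closure hcont continuous_dist.continuousOn
    (prod_mono interior_subset interior_subset) hdense (mk_mem_prod hx hy)

end VolumeRigidity

section Limits

variable {ι X Y : Type*}

lemma exists_mem_tendsto_ultrafilter [TopologicalSpace Y] {t : Set Y} (ht : IsCompact t)
    (l : Ultrafilter ι) {u : ι → Y} (hu : ∀ i, u i ∈ t) : ∃ y ∈ t, Tendsto u l (𝓝 y) :=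
  ht.ultrafilter_le_nhds (l.map u) (tendsto_principal.2 (Eventually.of_forall hu))

lemma exists_forall_tendsto_ultrafilter [TopologicalSpace Y] [Nonempty Y] {s : Set X} {t : Set Y}
    (ht : IsCompact t) (l : Ultrafilter ι) {F : ι → X → Y} (hF : ∀ i, MapsTo (F i) s t) :
    ∃ f : X → Y, ∀ x ∈ s, Tendsto (F · x) l (𝓝 (f x)) := by
  choose! f _ hf using fun x (hx : x ∈ s) =>
    exists_mem_tendsto_ultrafilter ht l fun i => hF i hx
  exact ⟨f, hf⟩

lemma lipschitzOnWith_of_tendsto [PseudoMetricSpace X] [PseudoMetricSpace Y] {l : Filter ι}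
    [l.NeBot] {F : ι → X → Y} {f : X → Y} {s : Set X} {c : ι → ℝ≥0} {C : ℝ≥0}
    (hc : Tendsto c l (𝓝 C)) (hF : ∀ i, LipschitzOnWith (c i) (F i) s)
    (hf : ∀ x ∈ s, Tendsto (F · x) l (𝓝 (f x))) : LipschitzOnWith C f s :=
  LipschitzOnWith.of_dist_le_mul fun x hx y hy =>
    le_of_tendsto_of_tendsto' ((hf x hx).dist (hf y hy))
      ((NNReal.tendsto_coe.2 hc).mul_const (dist x y)) fun i => (hF i).dist_le_mul x hx y hy

lemma surjOn_of_tendsto_ultrafilter [PseudoMetricSpace X] [MetricSpace Y] {l : Ultrafilter ι}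
    {F : ι → X → Y} {f : X → Y} {s : Set X} {t : Set Y} {c : ι → ℝ≥0} {C : ℝ≥0} (hs : IsCompact s)
    (hc : Tendsto c l (𝓝 C)) (hF : ∀ i, LipschitzOnWith (c i) (F i) s)
    (hsurj : ∀ i, SurjOn (F i) s t) (hf : ∀ x ∈ s, Tendsto (F · x) l (𝓝 (f x))) :
    SurjOn f s t := by
  intro y hy
  choose u hus huy using fun i => hsurj i hy
  obtain ⟨x, hx, hux⟩ := exists_mem_tendsto_ultrafilter hs l hus
  refine ⟨x, hx, tendsto_nhds_unique (hf x hx) ?_⟩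
  have hbound : Tendsto (fun i => c i * dist x (u i)) l (𝓝 0) := by
    simpa using (NNReal.tendsto_coe.2 hc).mul ((tendsto_const_nhds (x := x)).dist hux)
  refine tendsto_iff_dist_tendsto_zero.2 (squeeze_zero (fun _ => dist_nonneg) (fun i => ?_) hbound)
  simpa only [huy i] using (hF i).dist_le_mul x hx (u i) (hus i)

end Limits

section SimplexVolume

lemma addHaar_convexHull_range {E : Type*} [NormedAddCommGroup E] [NormedSpace ℝ E]
    [MeasurableSpace E] [BorelSpace E] (μ : Measure E) [μ.IsAddHaarMeasure] {n : ℕ}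
    (b : Basis (Fin n) ℝ E) (v : Fin (n + 1) → E) :
    μ (convexHull ℝ (range v)) = ENNReal.ofReal |b.det fun i => v i.succ - v 0| *
      μ (convexHull ℝ (range (Fin.cons 0 b : Fin (n + 1) → E))) := by
  have : FiniteDimensional ℝ E := b.finiteDimensional_of_finite
  obtain ⟨L, hL⟩ : ∃ L : E →ₗ[ℝ] E, ∀ i, L (b i) = v i.succ - v 0 :=
    ⟨b.constr ℝ fun i => v i.succ - v 0, b.constr_basis ℝ _⟩
  have hdet : LinearMap.det L = b.det fun i => v i.succ - v 0 := by
    rw [← funext hL, ← mul_one (LinearMap.det L), ← b.det_self, ← b.det_comp]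
    rfl
  have hrange : range v = v 0 +ᵥ L '' range (Fin.cons 0 b : Fin (n + 1) → E) := by
    rw [← range_comp, ← image_vadd, ← range_comp]
    congr 1
    ext i : 1
    refine Fin.cases ?_ (fun i => ?_) i
    · simp
    · simp [hL]
  rw [hrange, convexHull_vadd, ← L.image_convexHull, measure_vadd, Measure.addHaar_image_linearMap,
    hdet]

lemma dist_mul_infDist_line_eq_abs_areaForm {E : Type*} [NormedAddCommGroup E]
    [InnerProductSpace ℝ E] [Fact (finrank ℝ E = 2)] (o : Orientation ℝ E (Fin 2)) (p a b : E) :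
    dist a b * infDist p (line[ℝ, a, b] : Set E) = |o.areaForm (b - a) (p - a)| := by
  have : FiniteDimensional ℝ E := .of_fact_finrank_eq_two
  let q : E := ↑(EuclideanGeometry.orthogonalProjection line[ℝ, a, b] p)
  obtain ⟨t, ht⟩ : ∃ t : ℝ, AffineMap.lineMap a b t = q :=
    mem_affineSpan_pair_iff_exists_lineMap_eq.1 (EuclideanGeometry.orthogonalProjection_mem p)
  have horth : ⟪b - a, p - q⟫ = 0 :=
    EuclideanGeometry.vsub_orthogonalProjection_mem_direction_orthogonal line[ℝ, a, b] p _
      (AffineSubspace.vsub_mem_direction (right_mem_affineSpan_pair ℝ a b)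
        (left_mem_affineSpan_pair ℝ a b))
  have hpq : p - a = (p - q) + t • (b - a) := by
    rw [← ht, AffineMap.lineMap_apply_module']
    abel
  calc dist a b * infDist p (line[ℝ, a, b] : Set E) = ‖b - a‖ * ‖p - q‖ := by
        rw [← EuclideanGeometry.dist_orthogonalProjection_eq_infDist, dist_eq_norm', dist_eq_norm]
    _ = |o.areaForm (b - a) (p - q)| := (o.abs_areaForm_of_orthogonal horth).symm
    _ = |o.areaForm (b - a) (p - a)| := by
        rw [hpq, map_add, map_smul, o.areaForm_apply_self, smul_zero, add_zero]

end SimplexVolume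

section Triangles

variable {v v' : Fin 3 → E2}

lemma triArea_eq_abs_det (b : OrthonormalBasis (Fin 2) ℝ E2) (v : Fin 3 → E2) :
    triArea v = |b.toBasis.det fun i => v i.succ - v 0| / 2 := by
  have : Fact (finrank ℝ E2 = 2) := ⟨finrank_euclideanSpace_fin⟩
  let o := b.toBasis.orientation
  have hedges : (fun i : Fin 2 => v i.succ - v 0) = ![v 1 - v 0, v 2 - v 0] := by
    ext i : 1
    fin_cases i <;> rfl
  have hcycle : o.areaForm (v 2 - v 1) (v 0 - v 1) = o.areaForm (v 1 - v 0) (v 2 - v 0) := by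
    rw [← sub_sub_sub_cancel_right (v 2) (v 1) (v 0), ← neg_sub (v 1) (v 0), map_neg,
      LinearMap.map_sub₂, o.areaForm_apply_self, sub_zero, ← o.areaForm_swap]
  rw [hedges, ← o.volumeForm_robust' b, ← o.areaForm_to_volumeForm, ← hcycle,
    ← dist_mul_infDist_line_eq_abs_areaForm]
  rfl

lemma hausdorffMeasure_tri_le_of_triArea_le (h : triArea v ≤ triArea v') :
    μH[finrank ℝ E2] (Tri v) ≤ μH[finrank ℝ E2] (Tri v') := by
  let b := EuclideanSpace.basisFun (Fin 2) ℝ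
  rw [triArea_eq_abs_det b, triArea_eq_abs_det b] at h
  rw [Tri, Tri, addHaar_convexHull_range _ b.toBasis v, addHaar_convexHull_range _ b.toBasis v']
  gcongr ENNReal.ofReal ?_ * _
  linarith

lemma isCompact_tri (v : Fin 3 → E2) : IsCompact (Tri v) :=
  (finite_range v).isCompact_convexHull (𝕜 := ℝ)

lemma vertex_mem_tri (v : Fin 3 → E2) (i : Fin 3) : v i ∈ Tri v :=
  subset_convexHull ℝ _ (mem_range_self i)

lemma interior_tri_nonempty (hv : AffineIndependent ℝ v) : (interior (Tri v)).Nonempty := by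
  rw [Tri, interior_convexHull_nonempty_iff_affineSpan_eq_top,
    hv.affineSpan_eq_top_iff_card_eq_finrank_add_one]
  simp

lemma edist_div_edist_le_lipConst (f : E2 → E2) {x y : E2} (hx : x ∈ Tri v) (hy : y ∈ Tri v) :
    edist (f x) (f y) / edist x y ≤ lipConst v f :=
  le_iSup₂_of_le x hx (le_iSup₂_of_le y hy le_rfl)

lemma lipschitzOnWith_of_lipConst_le {f : E2 → E2} {c : ℝ≥0} (h : lipConst v f ≤ c) :
    LipschitzOnWith c f (Tri v) := by
  intro x hx y hy
  rcases eq_or_ne x y with rfl | hxy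
  · simp
  · exact (ENNReal.div_le_iff (edist_pos.2 hxy).ne' (edist_ne_top x y)).1
      ((edist_div_edist_le_lipConst f hx hy).trans h)

lemma edist_div_edist_le_lam (v v' : Fin 3 → E2) (i j : Fin 3) :
    edist (v' i) (v' j) / edist (v i) (v j) ≤ Lam v v' :=
  le_iInf₂ fun f hf => by
    simpa only [hf.2.2.2] using
      edist_div_edist_le_lipConst f (vertex_mem_tri v i) (vertex_mem_tri v j)

lemma exists_lipschitzOnWith_of_lam_le {C : ℝ≥0} (h : Lam v v' ≤ C) :
    ∃ f : E2 → E2, LipschitzOnWith C f (Tri v) ∧ SurjOn f (Tri v) (Tri v') ∧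
      ∀ i, f (v i) = v' i := by
  obtain ⟨c, -, hCc, hc⟩ := exists_seq_strictAnti_tendsto C
  have hex : ∀ n, ∃ f, IsLabelHomeo v v' f ∧ LipschitzOnWith (c n) f (Tri v) := fun n => by
    have hlt : Lam v v' < c n := h.trans_lt (ENNReal.coe_lt_coe.2 (hCc n))
    simp only [Lam, iInf_lt_iff] at hlt
    obtain ⟨f, hf, hfc⟩ := hlt
    exact ⟨f, hf, lipschitzOnWith_of_lipConst_le hfc.le⟩
  choose F hF hFc using hex
  let l : Ultrafilter ℕ := hyperfilter ℕ
  have hcl : Tendsto c l (𝓝 C) := hc.mono_left Nat.hyperfilter_le_atTop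
  obtain ⟨f, hf⟩ :=
    exists_forall_tendsto_ultrafilter (isCompact_tri v') l fun n => (hF n).2.1.mapsTo
  refine ⟨f, lipschitzOnWith_of_tendsto hcl hFc hf,
    surjOn_of_tendsto_ultrafilter (isCompact_tri v) hcl hFc (fun n => (hF n).2.1.surjOn) hf,
    fun i => tendsto_nhds_unique (hf _ (vertex_mem_tri v i)) ?_⟩
  simp only [(hF _).2.2.2 i, tendsto_const_nhds]

lemma dist_eq_of_lam_le_one (hv : AffineIndependent ℝ v) (harea : triArea v ≤ triArea v')
    (h : Lam v v' ≤ 1) (i j : Fin 3) : dist (v i) (v j) = dist (v' i) (v' j) := by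
  obtain ⟨f, hf, hsurj, hvert⟩ := exists_lipschitzOnWith_of_lam_le (C := 1) h
  have hle : μH[finrank ℝ E2] (Tri v) ≤ μH[finrank ℝ E2] (f '' Tri v) :=
    (hausdorffMeasure_tri_le_of_triArea_le harea).trans (measure_mono hsurj)
  rw [← hvert i, ← hvert j]
  exact (dist_map_eq_of_hausdorffMeasure_le_image (convex_convexHull ℝ _)
    (interior_tri_nonempty hv) hf (isCompact_tri v).measure_ne_top hle
    (vertex_mem_tri v i) (vertex_mem_tri v j)).symm

end Triangles

theorem stmt6 (v v' : Fin 3 → E2)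
    (hv : AffineIndependent ℝ v) (hv' : AffineIndependent ℝ v')
    (harea : triArea v = triArea v')
    (h : Lam v v' ≤ 1) :
    Lam v v' = 1 ∧ ∀ i, edgeLen v i = edgeLen v' i := by
  have hdist : ∀ i j, dist (v i) (v j) = dist (v' i) (v' j) :=
    dist_eq_of_lam_le_one hv harea.le h
  have hne : edist (v 0) (v 1) ≠ 0 := (edist_pos.2 (hv.injective.ne (by decide))).ne'
  refine ⟨h.antisymm ?_, fun i => hdist _ _⟩
  calc 1 = edist (v' 0) (v' 1) / edist (v 0) (v 1) := by
        rw [edist_dist (v' 0), ← hdist, ← edist_dist, ENNReal.div_self hne (edist_ne_top _ _)]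
    _ ≤ Lam v v' := edist_div_edist_le_lam v v' 0 1
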